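/- arXiv:1505.00386 — 5 statements merged into one kernel-verified Lean document; each statement's English description precedes it below -/
import Mathlib

section
/- Let G be a connected {K_{1,3}, Z_2, N}-free graph which contains H_6 as an induced subgraph, say with vertices labeled x_1,…,x_7 as in the definition of H_6, and write H for this induced copy. Then for each vertex a ∈ V(G) − V(H) with N_G(a) ∩ V(H) ≠ ∅, we have N_G(a) ∩ V(H) = {x_i, x_{i+1}, x_7} for some i ∈ {1,3}; consequently G[V(H) ∪ {a}] ≅ H_7. -/
open SimpleGraph

def graphOfList (n : ℕ) (E : List (Fin n × Fin n)) : SimpleGraph (Fin n) :=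
  SimpleGraph.fromRel (fun a b => (a, b) ∈ E)

/-- The claw `K_{1,3}`, with center `0`. -/
def K13 : SimpleGraph (Fin 4) := graphOfList 4 [(0,1), (0,2), (0,3)]

/-- `Z_k = N_{k,0,0}`: a triangle `0,1,2` together with a path of length `k`
attached at the vertex `2`. -/
def Zgraph (k : ℕ) : SimpleGraph (Fin (k + 3)) :=
  SimpleGraph.fromRel (fun a b =>
    (a.val = 0 ∧ b.val = 1) ∨ (a.val = 0 ∧ b.val = 2) ∨ (a.val = 1 ∧ b.val = 2) ∨
    (2 ≤ a.val ∧ b.val = a.val + 1))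

/-- The net `N = N_{1,1,1}`: a triangle `0,1,2` with pendant vertices `3,4,5`
attached to `0,1,2` respectively. -/
def Ngraph : SimpleGraph (Fin 6) :=
  graphOfList 6 [(0,1), (0,2), (1,2), (0,3), (1,4), (2,5)]

/-- `G` contains `H` as an induced subgraph. -/
def ContainsInduced {V W : Type*} (G : SimpleGraph V) (H : SimpleGraph W) : Prop :=
  Nonempty (H ↪g G)

/-- The graph `H₆` with vertices `x₁,…,x₇` encoded as `0,…,6`. -/
def HGraph6 : SimpleGraph (Fin 7) :=
  graphOfList 7 [(0,1), (0,2), (0,4), (1,3), (1,5), (2,3), (2,4), (3,5), (4,5), (4,6), (5,6)]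

/-- The graph `H₇` with vertices `y₁,…,y₈` encoded as `0,…,7`. -/
def HGraph7 : SimpleGraph (Fin 8) :=
  graphOfList 8 [(0,1), (0,2), (0,4), (1,3), (1,5), (2,3), (2,4), (2,6), (3,5), (3,6),
    (4,5), (4,7), (5,7), (6,7)]

/-!
`H₆` is a triangular prism with one more vertex `6` joined to both ends of the rung `45`. Let `S` be
the set of vertices of the copy of `H₆` that are adjacent to `a`. Each excluded claw or `Z₂`
through `a` is a closure condition on `S`: for instance, if `S` contains the first two vertices of
an induced path on four vertices, then it contains one of the last two. Up to the automorphisms of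
`H₆`, which permute the other two rungs `01`, `23` and the two triangles, these conditions exclude
in turn `0, 1, 3 ∈ S`, then `0, 2 ∈ S`, then `4 ∈ S`. Hence `S` contains both ends or neither end of
`01` and of `23`, contains `6` as soon as it is nonempty, and is not `{6}`, and it cannot contain
both rungs.
-/

section InducedSubgraphs

variable {V W : Type*} {G : SimpleGraph V} {H : SimpleGraph W}

theorem containsInduced_of_forall_lt [LinearOrder W] (g : W → V)
    (hg : ∀ i j, i < j → g i ≠ g j ∧ (G.Adj (g i) (g j) ↔ H.Adj i j)) :
    ContainsInduced G H := by
  refine ⟨⟨⟨g, .of_lt_imp_ne fun i j hij => (hg i j hij).1⟩, fun {i j} => ?_⟩⟩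
  rcases lt_trichotomy i j with hij | rfl | hji
  · exact (hg i j hij).2
  · simp
  · exact (G.adj_comm ..).trans ((hg j i hji).2.trans (H.adj_comm ..))

theorem adj_of_not_containsInduced_K13 (hK : ¬ ContainsInduced G K13) {c x y z : V}
    (hcx : G.Adj c x) (hcy : G.Adj c y) (hcz : G.Adj c z)
    (hxy : x ≠ y) (hxz : x ≠ z) (hyz : y ≠ z) :
    G.Adj x y ∨ G.Adj x z ∨ G.Adj y z := by
  contrapose! hK
  refine containsInduced_of_forall_lt ![c, x, y, z] ?_
  simp [Fin.forall_fin_succ, K13, graphOfList, hcx, hcx.ne, hcy, hcy.ne, hcz, hcz.ne,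
    hxy, hxz, hyz, hK]

theorem adj_of_not_containsInduced_Zgraph_two (hZ : ¬ ContainsInduced G (Zgraph 2))
    {p q r s t : V} (hpq : G.Adj p q) (hpr : G.Adj p r) (hqr : G.Adj q r) (hrs : G.Adj r s)
    (hst : G.Adj s t) :
    G.Adj p s ∨ G.Adj p t ∨ G.Adj q s ∨ G.Adj q t ∨ G.Adj r t := by
  contrapose! hZ
  obtain ⟨hps, hpt, hqs, hqt, hrt⟩ := hZ
  have hps' : p ≠ s := by rintro rfl; exact hqs hpq.symm
  have hpt' : p ≠ t := by rintro rfl; exact hps hst.symm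
  have hqs' : q ≠ s := by rintro rfl; exact hps hpq
  have hqt' : q ≠ t := by rintro rfl; exact hqs hst.symm
  have hrt' : r ≠ t := by rintro rfl; exact hpt hpr
  refine containsInduced_of_forall_lt (W := Fin 5) ![p, q, r, s, t] ?_
  simp [Fin.forall_fin_succ, Zgraph, *, hpq.ne, hpr.ne, hqr.ne, hrs.ne, hst.ne]

end InducedSubgraphs

section AttachedVertex

variable {V W : Type*} {G : SimpleGraph V} {H : SimpleGraph W} {a : V}

theorem adj_or_adj_of_adj_cherry_center (hK : ¬ ContainsInduced G K13) (f : H ↪g G)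
    (ha : ∀ i, f i ≠ a) (i j k : W) (hH : H.Adj i j ∧ H.Adj i k ∧ Hᶜ.Adj j k)
    (hi : G.Adj a (f i)) : G.Adj a (f j) ∨ G.Adj a (f k) := by
  obtain ⟨hij, hik, hjk⟩ := hH
  have := adj_of_not_containsInduced_K13 hK (f.map_adj_iff.2 hij) (f.map_adj_iff.2 hik) hi.symm
    (f.injective.ne hjk.ne) (ha j) (ha k)
  simpa [f.map_adj_iff, ((compl_adj ..).1 hjk).2, G.adj_comm _ a] using this

theorem not_adj_of_adj_of_adj_indepTriple (hK : ¬ ContainsInduced G K13) (f : H ↪g G) (i j k : W)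
    (hH : Hᶜ.Adj i j ∧ Hᶜ.Adj i k ∧ Hᶜ.Adj j k) (hi : G.Adj a (f i)) (hj : G.Adj a (f j)) :
    ¬ G.Adj a (f k) := by
  obtain ⟨hij, hik, hjk⟩ := hH
  intro hk
  have := adj_of_not_containsInduced_K13 hK hi hj hk (f.injective.ne hij.ne)
    (f.injective.ne hik.ne) (f.injective.ne hjk.ne)
  simp only [f.map_adj_iff, compl_adj] at this hij hik hjk
  tauto

theorem adj_or_adj_of_adj_inducedPath (hZ : ¬ ContainsInduced G (Zgraph 2)) (f : H ↪g G)
    (i j k l : W)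
    (hH : H.Adj i j ∧ H.Adj j k ∧ H.Adj k l ∧ ¬ H.Adj i k ∧ ¬ H.Adj i l ∧ ¬ H.Adj j l)
    (hi : G.Adj a (f i)) (hj : G.Adj a (f j)) : G.Adj a (f k) ∨ G.Adj a (f l) := by
  simp only [← f.map_adj_iff] at hH
  obtain ⟨hij, hjk, hkl, hik, hil, hjl⟩ := hH
  have := adj_of_not_containsInduced_Zgraph_two hZ hi hj hij hjk hkl
  tauto

theorem adj_of_adj_inducedMatching (hZ : ¬ ContainsInduced G (Zgraph 2)) (f : H ↪g G)
    (i j k l : W)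
    (hH : H.Adj i j ∧ H.Adj k l ∧ ¬ H.Adj i k ∧ ¬ H.Adj i l ∧ ¬ H.Adj j k ∧ ¬ H.Adj j l)
    (hi : G.Adj a (f i)) (hj : G.Adj a (f j)) (hk : G.Adj a (f k)) : G.Adj a (f l) := by
  simp only [← f.map_adj_iff] at hH
  obtain ⟨hij, hkl, hik, hil, hjk, hjl⟩ := hH
  have := adj_of_not_containsInduced_Zgraph_two hZ hij hi.symm hj.symm hk hkl
  tauto

theorem adj_of_adj_inducedPaw (hZ : ¬ ContainsInduced G (Zgraph 2)) (f : H ↪g G) (i j k l : W)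
    (hH : H.Adj i j ∧ H.Adj i k ∧ H.Adj j k ∧ H.Adj k l ∧ ¬ H.Adj i l ∧ ¬ H.Adj j l)
    (hl : G.Adj a (f l)) : G.Adj a (f i) ∨ G.Adj a (f j) ∨ G.Adj a (f k) := by
  simp only [← f.map_adj_iff] at hH
  obtain ⟨hij, hik, hjk, hkl, hil, hjl⟩ := hH
  have := adj_of_not_containsInduced_Zgraph_two hZ hij hik hjk hkl hl.symm
  simpa [hil, hjl, G.adj_comm _ a] using this

end AttachedVertex

theorem nonempty_induce_range_union_singleton_iso {V : Type*} {G : SimpleGraph V} {n : ℕ}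
    {H : SimpleGraph (Fin n)} {K : SimpleGraph (Fin (n + 1))} (p : Fin (n + 1))
    (hHK : ∀ i j, K.Adj (p.succAbove i) (p.succAbove j) ↔ H.Adj i j) (f : H ↪g G)
    {a : V} (ha : ∀ i, f i ≠ a) (hadj : ∀ i, G.Adj a (f i) ↔ K.Adj p (p.succAbove i)) :
    Nonempty (G.induce (Set.range f ∪ {a}) ≃g K) := by
  let g : Fin (n + 1) → V := p.insertNth a f
  have hg_inj : Function.Injective g := by
    simp [g, Function.Injective, p.forall_iff_succAbove, ha, fun i => (ha i).symm]
  have hg_adj : ∀ i j, G.Adj (g i) (g j) ↔ K.Adj i j := by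
    simp [g, p.forall_iff_succAbove, hHK, hadj, G.adj_comm _ a, K.adj_comm _ p, f.map_adj_iff]
  have hg_range : Set.range g = Set.range f ∪ {a} := by
    rw [Set.union_singleton]
    exact Fin.range_insertNth p a f
  rw [← hg_range]
  exact ⟨(Embedding.isoInduceRange ⟨⟨g, hg_inj⟩, hg_adj _ _⟩).symm⟩

namespace HGraph6

instance : DecidableRel HGraph6.Adj := inferInstanceAs (DecidableRel (fromRel _).Adj)

/-- `H₆` is a prism, with triangles `0, 2, 4` and `1, 3, 5` joined by the rungs `01`, `23`, `45`,
together with the vertex `6` adjacent to both ends of the rung `45`. This automorphism exchanges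
the rungs `01` and `23`. -/
def swapRungs : HGraph6 ≃g HGraph6 where
  toFun := ![2, 3, 0, 1, 4, 5, 6]
  invFun := ![2, 3, 0, 1, 4, 5, 6]
  left_inv := by decide
  right_inv := by decide
  map_rel_iff' := by decide

/-- The automorphism of `H₆` exchanging the triangles `0, 2, 4` and `1, 3, 5` of the prism. -/
def swapTriangles : HGraph6 ≃g HGraph6 where
  toFun := ![1, 0, 3, 2, 5, 4, 6]
  invFun := ![1, 0, 3, 2, 5, 4, 6]
  left_inv := by decide
  right_inv := by decide
  map_rel_iff' := by decide

variable {V : Type*} {G : SimpleGraph V} {a : V}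

theorem not_adj_three_of_adj_zero_of_adj_one (hK : ¬ ContainsInduced G K13)
    (hZ : ¬ ContainsInduced G (Zgraph 2)) (f : HGraph6 ↪g G)
    (h0 : G.Adj a (f 0)) (h1 : G.Adj a (f 1)) : ¬ G.Adj a (f 3) := by
  intro h3
  have h6 : ¬ G.Adj a (f 6) := not_adj_of_adj_of_adj_indepTriple hK f 0 3 6 (by decide) h0 h3
  have h4 : G.Adj a (f 4) :=
    (adj_or_adj_of_adj_inducedPath hZ f 1 0 4 6 (by decide) h1 h0).resolve_right h6
  exact h6 (adj_of_adj_inducedMatching hZ f 1 3 4 6 (by decide) h1 h3 h4)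

theorem not_adj_two_of_adj_zero (hK : ¬ ContainsInduced G K13)
    (hZ : ¬ ContainsInduced G (Zgraph 2)) (f : HGraph6 ↪g G) (ha : ∀ i, f i ≠ a)
    (h0 : G.Adj a (f 0)) : ¬ G.Adj a (f 2) := by
  intro h2
  have h1 : ¬ G.Adj a (f 1) := fun h1 =>
    not_adj_three_of_adj_zero_of_adj_one hK hZ (f.comp swapTriangles.toEmbedding) h1 h0 h2
  have h3 : ¬ G.Adj a (f 3) := fun h3 =>
    not_adj_three_of_adj_zero_of_adj_one hK hZ
      (f.comp (swapRungs.comp swapTriangles).toEmbedding) h3 h2 h0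
  have h5 : G.Adj a (f 5) :=
    (adj_or_adj_of_adj_inducedPath hZ f 2 0 1 5 (by decide) h2 h0).resolve_left h1
  have h4 : G.Adj a (f 4) :=
    (adj_or_adj_of_adj_cherry_center hK f ha 5 1 4 (by decide) h5).resolve_left h1
  exact (adj_or_adj_of_adj_inducedPath hZ f 4 0 1 3 (by decide) h4 h0).elim h1 h3

theorem not_adj_three_of_adj_one (hK : ¬ ContainsInduced G K13)
    (hZ : ¬ ContainsInduced G (Zgraph 2)) (f : HGraph6 ↪g G) (ha : ∀ i, f i ≠ a)
    (h1 : G.Adj a (f 1)) : ¬ G.Adj a (f 3) :=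
  not_adj_two_of_adj_zero hK hZ (f.comp swapTriangles.toEmbedding) (fun _ => ha _) h1

theorem not_adj_four (hK : ¬ ContainsInduced G K13) (hZ : ¬ ContainsInduced G (Zgraph 2))
    (f : HGraph6 ↪g G) (ha : ∀ i, f i ≠ a) : ¬ G.Adj a (f 4) := by
  intro h4
  have h02 : G.Adj a (f 0) → ¬ G.Adj a (f 2) := not_adj_two_of_adj_zero hK hZ f ha
  have h13 : G.Adj a (f 1) → ¬ G.Adj a (f 3) := not_adj_three_of_adj_one hK hZ f ha
  have h6 : G.Adj a (f 6) := by
    have h06 := adj_or_adj_of_adj_cherry_center hK f ha 4 0 6 (by decide) h4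
    have h26 := adj_or_adj_of_adj_cherry_center hK f ha 4 2 6 (by decide) h4
    tauto
  have h01 : G.Adj a (f 0) ∨ G.Adj a (f 1) :=
    adj_or_adj_of_adj_inducedPath hZ f 6 4 0 1 (by decide) h6 h4
  have h23 : G.Adj a (f 2) ∨ G.Adj a (f 3) :=
    adj_or_adj_of_adj_inducedPath hZ f 6 4 2 3 (by decide) h6 h4
  rcases h01 with h0 | h1
  · have h3 := h23.resolve_left (h02 h0)
    exact not_adj_of_adj_of_adj_indepTriple hK f 0 3 6 (by decide) h0 h3 h6
  · have h2 := h23.resolve_right (h13 h1)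
    exact not_adj_of_adj_of_adj_indepTriple hK f 1 2 6 (by decide) h1 h2 h6

theorem not_adj_five (hK : ¬ ContainsInduced G K13) (hZ : ¬ ContainsInduced G (Zgraph 2))
    (f : HGraph6 ↪g G) (ha : ∀ i, f i ≠ a) : ¬ G.Adj a (f 5) :=
  not_adj_four hK hZ (f.comp swapTriangles.toEmbedding) fun _ => ha _

theorem adj_one_of_adj_zero (hK : ¬ ContainsInduced G K13)
    (hZ : ¬ ContainsInduced G (Zgraph 2)) (f : HGraph6 ↪g G) (ha : ∀ i, f i ≠ a)
    (h0 : G.Adj a (f 0)) : G.Adj a (f 1) :=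
  (adj_or_adj_of_adj_cherry_center hK f ha 0 1 2 (by decide) h0).resolve_right
    (not_adj_two_of_adj_zero hK hZ f ha h0)

theorem adj_six_of_adj_zero (hK : ¬ ContainsInduced G K13)
    (hZ : ¬ ContainsInduced G (Zgraph 2)) (f : HGraph6 ↪g G) (ha : ∀ i, f i ≠ a)
    (h0 : G.Adj a (f 0)) : G.Adj a (f 6) :=
  have h1 : G.Adj a (f 1) := adj_one_of_adj_zero hK hZ f ha h0
  (adj_or_adj_of_adj_inducedPath hZ f 1 0 4 6 (by decide) h1 h0).resolve_left
    (not_adj_four hK hZ f ha)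

theorem adj_six_of_adj (hK : ¬ ContainsInduced G K13) (hZ : ¬ ContainsInduced G (Zgraph 2))
    (f : HGraph6 ↪g G) (ha : ∀ i, f i ≠ a) {i : Fin 7} (hi : G.Adj a (f i)) :
    G.Adj a (f 6) := by
  have of_image_zero (φ : HGraph6 ≃g HGraph6) (h : G.Adj a (f (φ 0))) : G.Adj a (f (φ 6)) :=
    adj_six_of_adj_zero hK hZ (f.comp φ.toEmbedding) (fun _ => ha _) h
  fin_cases i
  · exact of_image_zero .refl hi
  · exact of_image_zero swapTriangles hi
  · exact of_image_zero swapRungs hi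
  · exact of_image_zero (swapRungs.comp swapTriangles) hi
  · exact absurd hi (not_adj_four hK hZ f ha)
  · exact absurd hi (not_adj_five hK hZ f ha)
  · exact hi

theorem adj_iff_of_adj_zero (hK : ¬ ContainsInduced G K13)
    (hZ : ¬ ContainsInduced G (Zgraph 2)) (f : HGraph6 ↪g G) (ha : ∀ i, f i ≠ a)
    (h0 : G.Adj a (f 0)) (j : Fin 7) : G.Adj a (f j) ↔ j = 0 ∨ j = 1 ∨ j = 6 := by
  have h1 : G.Adj a (f 1) := adj_one_of_adj_zero hK hZ f ha h0
  have h2 : ¬ G.Adj a (f 2) := not_adj_two_of_adj_zero hK hZ f ha h0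
  have h3 : ¬ G.Adj a (f 3) := not_adj_three_of_adj_one hK hZ f ha h1
  have h4 : ¬ G.Adj a (f 4) := not_adj_four hK hZ f ha
  have h5 : ¬ G.Adj a (f 5) := not_adj_five hK hZ f ha
  have h6 : G.Adj a (f 6) := adj_six_of_adj_zero hK hZ f ha h0
  fin_cases j <;> simp [h0, h1, h2, h3, h4, h5, h6]

theorem adj_iff_of_adj_two (hK : ¬ ContainsInduced G K13)
    (hZ : ¬ ContainsInduced G (Zgraph 2)) (f : HGraph6 ↪g G) (ha : ∀ i, f i ≠ a)
    (h2 : G.Adj a (f 2)) (j : Fin 7) : G.Adj a (f j) ↔ j = 2 ∨ j = 3 ∨ j = 6 := by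
  have hswap : ∀ i, (i = 0 ∨ i = 1 ∨ i = 6) ↔
      (swapRungs i = 2 ∨ swapRungs i = 3 ∨ swapRungs i = 6) := by decide
  obtain ⟨i, rfl⟩ := swapRungs.surjective j
  have hi : G.Adj a (f (swapRungs i)) ↔ i = 0 ∨ i = 1 ∨ i = 6 :=
    adj_iff_of_adj_zero hK hZ (f.comp swapRungs.toEmbedding) (fun _ => ha _) h2 i
  exact hi.trans (hswap i)

theorem adj_iff_or_adj_iff (hK : ¬ ContainsInduced G K13)
    (hZ : ¬ ContainsInduced G (Zgraph 2)) (f : HGraph6 ↪g G) (ha : ∀ i, f i ≠ a)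
    {i : Fin 7} (hi : G.Adj a (f i)) :
    (∀ j, G.Adj a (f j) ↔ j = 0 ∨ j = 1 ∨ j = 6) ∨
      (∀ j, G.Adj a (f j) ↔ j = 2 ∨ j = 3 ∨ j = 6) := by
  have h6 : G.Adj a (f 6) := adj_six_of_adj hK hZ f ha hi
  rcases adj_of_adj_inducedPaw hZ f 0 2 4 6 (by decide) h6 with h0 | h2 | h4
  · exact .inl (adj_iff_of_adj_zero hK hZ f ha h0)
  · exact .inr (adj_iff_of_adj_two hK hZ f ha h2)
  · exact absurd h4 (not_adj_four hK hZ f ha)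

end HGraph6

instance : DecidableRel HGraph7.Adj := inferInstanceAs (DecidableRel (fromRel _).Adj)

theorem nonempty_induce_iso_HGraph7 {V : Type*} {G : SimpleGraph V} (f : HGraph6 ↪g G) {a : V}
    (ha : ∀ i, f i ≠ a) (hadj : ∀ j, G.Adj a (f j) ↔ j = 2 ∨ j = 3 ∨ j = 6) :
    Nonempty (G.induce (Set.range f ∪ {a}) ≃g HGraph7) := by
  have hH : ∀ i j, HGraph7.Adj (Fin.succAbove 6 i) (Fin.succAbove 6 j) ↔ HGraph6.Adj i j := by
    decide
  have h7 : ∀ j, HGraph7.Adj 6 (Fin.succAbove 6 j) ↔ j = 2 ∨ j = 3 ∨ j = 6 := by decide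
  exact nonempty_induce_range_union_singleton_iso 6 hH f ha fun j => (hadj j).trans (h7 j).symm

theorem stmt10_general {V : Type*} (G : SimpleGraph V)
    (hK13 : ¬ ContainsInduced G K13) (hZ2 : ¬ ContainsInduced G (Zgraph 2))
    (f : HGraph6 ↪g G) (a : V) (ha : a ∉ Set.range ⇑f)
    (hnbr : ∃ b ∈ Set.range ⇑f, G.Adj a b) :
    ((∀ j : Fin 7, G.Adj a (f j) ↔ (j = 0 ∨ j = 1 ∨ j = 6)) ∨
      (∀ j : Fin 7, G.Adj a (f j) ↔ (j = 2 ∨ j = 3 ∨ j = 6))) ∧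
    Nonempty ((G.induce (Set.range ⇑f ∪ {a})) ≃g HGraph7) := by
  obtain ⟨_, ⟨i, rfl⟩, hi⟩ := hnbr
  have ha' : ∀ i, f i ≠ a := by simpa using ha
  have hadj := HGraph6.adj_iff_or_adj_iff hK13 hZ2 f ha' hi
  refine ⟨hadj, ?_⟩
  rcases hadj with hadj | hadj
  · have hrange : Set.range (f.comp HGraph6.swapRungs.toEmbedding) = Set.range f :=
      EquivLike.range_comp f HGraph6.swapRungs
    have hswap : ∀ j, (HGraph6.swapRungs j = 0 ∨ HGraph6.swapRungs j = 1 ∨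
        HGraph6.swapRungs j = 6) ↔ (j = 2 ∨ j = 3 ∨ j = 6) := by decide
    rw [← hrange]
    exact nonempty_induce_iso_HGraph7 _ (fun _ => ha' _) fun j => (hadj _).trans (hswap j)
  · exact nonempty_induce_iso_HGraph7 f ha' hadj

/-- **Lemma 2.7 (Statement 10).** Let `G` be a connected `{K_{1,3}, Z₂, N}`-free graph
containing an induced copy `H` of `H₆` (given by the embedding `f`, with `xᵢ = f (i-1)`).
Then every `a ∈ V(G) − V(H)` with `N_G(a) ∩ V(H) ≠ ∅` satisfies
`N_G(a) ∩ V(H) = {x_i, x_{i+1}, x₇}` for some `i ∈ {1, 3}`; consequently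
`G[V(H) ∪ {a}] ≅ H₇`. -/
theorem stmt10 {V : Type*} [Fintype V] (G : SimpleGraph V) (hconn : G.Connected)
    (hK13 : ¬ ContainsInduced G K13) (hZ2 : ¬ ContainsInduced G (Zgraph 2))
    (hN : ¬ ContainsInduced G Ngraph)
    (f : HGraph6 ↪g G) (a : V) (ha : a ∉ Set.range ⇑f)
    (hnbr : ∃ b ∈ Set.range ⇑f, G.Adj a b) :
    ((∀ j : Fin 7, G.Adj a (f j) ↔ (j = 0 ∨ j = 1 ∨ j = 6)) ∨
      (∀ j : Fin 7, G.Adj a (f j) ↔ (j = 2 ∨ j = 3 ∨ j = 6))) ∧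
    Nonempty ((G.induce (Set.range ⇑f ∪ {a})) ≃g HGraph7) :=
  stmt10_general G hK13 hZ2 f a ha hnbr
end

section
/- Let G be a K_{1,3}-free graph, let H be an induced subgraph of G that is a fat l-path or a fat l-cycle with l ≥ 5, and let a ∈ V(G) − V(H). Then the neighborhood N_G(a) intersects at most four of the fundamental cliques of H. -/
open SimpleGraph

/-- `B_{1,m} = N_{1,m,0}`: a triangle `0,1,2`, a pendant vertex `3` attached to `0`,
and a path `4,5,…,m+3` of length `m` attached at the vertex `1`. -/
def Bgraph (m : ℕ) : SimpleGraph (Fin (m + 4)) :=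
  SimpleGraph.fromRel (fun a b =>
    (a.val = 0 ∧ b.val = 1) ∨ (a.val = 0 ∧ b.val = 2) ∨ (a.val = 1 ∧ b.val = 2) ∨
    (a.val = 0 ∧ b.val = 3) ∨ (a.val = 1 ∧ b.val = 4) ∨
    (4 ≤ a.val ∧ b.val = a.val + 1))

/-- The cliques `L 0, …, L (l-1)` form an (induced) fat `l`-path decomposition:
they are nonempty, pairwise disjoint, and two distinct vertices lying in them are adjacent
iff they lie in the same clique or in consecutive cliques. -/
def IsFatPathDecomp {V : Type*} (G : SimpleGraph V) (l : ℕ) (L : Fin l → Set V) : Prop :=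
  (∀ i, (L i).Nonempty) ∧
  (∀ i j, i ≠ j → Disjoint (L i) (L j)) ∧
  (∀ (i j : Fin l) (u v : V), u ∈ L i → v ∈ L j → u ≠ v →
    (G.Adj u v ↔ i = j ∨ (i : ℕ) + 1 = (j : ℕ) ∨ (j : ℕ) + 1 = (i : ℕ)))

/-- The cliques `L 0, …, L l` form an (induced) fat `l`-cycle decomposition:
they are nonempty, pairwise disjoint, and two distinct vertices lying in them are adjacent
iff they lie in the same clique or in (cyclically) consecutive cliques. -/
def IsFatCycleDecomp {V : Type*} (G : SimpleGraph V) (l : ℕ) (L : Fin (l + 1) → Set V) : Prop :=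
  (∀ i, (L i).Nonempty) ∧
  (∀ i j, i ≠ j → Disjoint (L i) (L j)) ∧
  (∀ (i j : Fin (l + 1)) (u v : V), u ∈ L i → v ∈ L j → u ≠ v →
    (G.Adj u v ↔ i = j ∨ ((i : ℕ) + 1) % (l + 1) = (j : ℕ) ∨ ((j : ℕ) + 1) % (l + 1) = (i : ℕ)))

/-- `G` is a fat `l`-path (so `l ≥ 5` and the fundamental cliques cover `G`). -/
def IsFatPath {V : Type*} (G : SimpleGraph V) (l : ℕ) : Prop :=
  5 ≤ l ∧ ∃ L : Fin l → Set V, IsFatPathDecomp G l L ∧ ∀ v : V, ∃ i, v ∈ L i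

/-- `G` is a fat `l`-cycle (so `l ≥ 5` and the `l+1` fundamental cliques cover `G`). -/
def IsFatCycle {V : Type*} (G : SimpleGraph V) (l : ℕ) : Prop :=
  5 ≤ l ∧ ∃ L : Fin (l + 1) → Set V, IsFatCycleDecomp G l L ∧ ∀ v : V, ∃ i, v ∈ L i

/-- `G` belongs to the family `𝒫(p)` of all fat `i`-paths and fat `i`-cycles with `i ≥ p`. -/
def MemFatFamily {V : Type*} (G : SimpleGraph V) (p : ℕ) : Prop :=
  ∃ l, p ≤ l ∧ (IsFatPath G l ∨ IsFatCycle G l)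

/-!
An independent set of indices whose cliques all meet `N(a)` yields an independent set of the same
size inside `N(a)`, so in a claw-free graph the indices met by `N(a)` contain no three pairwise
non-consecutive ones. A path, or a cycle with a vertex removed, is bipartite, and each colour class
of the indices met by `N(a)` is independent, hence has at most two elements. If `N(a)` meets every
clique of a fat cycle, the same bound holds for all but one of the cliques, so the bound of four is
exceeded only by a cycle of exactly five cliques, as in the wheel with five spokes.
-/

/-- An `H`-partition of a subset of the vertices of `G`: disjoint parts `L i`, indexed by the
vertices of `H`, such that every edge of `G` between vertices of the parts lies inside one part or
runs along an edge of `H`. The parts may be empty and need not cover `G`; fat paths and fat cycles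
are `H`-partitioned by their fundamental cliques, with `H` a path or a cycle. -/
def IsHPartition {V ι : Type*} (G : SimpleGraph V) (H : SimpleGraph ι) (L : ι → Set V) : Prop :=
  Pairwise (Function.onFun Disjoint L) ∧
    ∀ ⦃i j u v⦄, u ∈ L i → v ∈ L j → G.Adj u v → i = j ∨ H.Adj i j

section IndependentSets

variable {V ι : Type*} {G : SimpleGraph V} {H : SimpleGraph ι}

theorem indepSetFreeOn_neighborSet_of_not_containsInduced_K13 (hG : ¬ ContainsInduced G K13)
    (a : V) : G.IndepSetFreeOn (G.neighborSet a) 3 := by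
  classical
  rintro t ht ⟨hindep, hcard⟩
  obtain ⟨x, y, z, hxy, hxz, hyz, rfl⟩ := Finset.card_eq_three.mp hcard
  have hax : G.Adj a x := ht (by simp)
  have hay : G.Adj a y := ht (by simp)
  have haz : G.Adj a z := ht (by simp)
  have nxy : ¬ G.Adj x y := hindep (by simp) (by simp) hxy
  have nxz : ¬ G.Adj x z := hindep (by simp) (by simp) hxz
  have nyz : ¬ G.Adj y z := hindep (by simp) (by simp) hyz
  have hinj : Function.Injective ![a, x, y, z] := by
    intro i j h
    have := hax.ne
    have := hay.ne
    have := haz.ne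
    fin_cases i <;> fin_cases j <;> simp_all
  refine hG ⟨⟨⟨![a, x, y, z], hinj⟩, fun {i j} ↦ ?_⟩⟩
  change G.Adj (![a, x, y, z] i) (![a, x, y, z] j) ↔ K13.Adj i j
  fin_cases i <;> fin_cases j <;> simp [K13, graphOfList, G.adj_comm, *]

theorem IsHPartition.indepSetFreeOn {L : ι → Set V} (hL : IsHPartition G H L) {N : Set V} {n : ℕ}
    (hN : G.IndepSetFreeOn N n) : H.IndepSetFreeOn {i | ∃ u ∈ L i, u ∈ N} n := by
  rintro T hT ⟨hindep, hcard⟩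
  choose f hfL hfN using fun i : T ↦ hT i.2
  have hf : Function.Injective f := fun i j hij ↦ Subtype.ext <| by
    by_contra hne
    exact (hL.1 hne).ne_of_mem (hfL i) (hfL j) hij
  refine hN (t := Finset.univ.map ⟨f, hf⟩) ?_ ⟨?_, by simpa using hcard⟩
  · simpa [Set.range_subset_iff] using hfN
  · simp only [Finset.coe_map, Function.Embedding.coeFn_mk, Finset.coe_univ, Set.image_univ]
    rintro _ ⟨i, rfl⟩ _ ⟨j, rfl⟩ hne hadj
    rcases hL.2 (hfL i) (hfL j) hadj with hij | hij
    · exact hne (congrArg f (Subtype.ext hij))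
    · exact hindep i.2 j.2 hij.ne hij

theorem card_le_of_indepSetFreeOn {S : Set ι} {m : ℕ} (hS : H.IndepSetFreeOn S (m + 1))
    {t : Finset ι} (htS : ↑t ⊆ S) (ht : H.IsIndepSet t) : t.card ≤ m := by
  by_contra! hlt
  obtain ⟨r, hrt, hr⟩ := Finset.exists_subset_card_eq hlt
  have hrt' : (r : Set ι) ⊆ t := Finset.coe_subset.mpr hrt
  exact hS (hrt'.trans htS) ⟨ht.mono hrt', hr⟩

theorem card_le_mul_of_colorable_of_indepSetFreeOn {s : Finset ι} {k m : ℕ}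
    (hk : (H.induce (s : Set ι)).Colorable k) (hs : H.IndepSetFreeOn s (m + 1)) :
    s.card ≤ m * k := by
  obtain ⟨C⟩ := hk
  have hclass (c : Fin k) : (s.attach.filter (C · = c)).card ≤ m := by
    rw [← Finset.card_map (Function.Embedding.subtype (· ∈ s))]
    refine card_le_of_indepSetFreeOn hs (by simp +contextual [Set.subset_def]) ?_
    intro i hi j hj _ hadj
    simp only [Finset.mem_coe, Finset.mem_map, Finset.mem_filter] at hi hj
    obtain ⟨i, ⟨-, hi⟩, rfl⟩ := hi
    obtain ⟨j, ⟨-, hj⟩, rfl⟩ := hj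
    exact C.valid (v := i) (w := j) hadj (hi.trans hj.symm)
  simpa using Finset.card_le_mul_card_image_of_maps_to
    (fun i _ ↦ Finset.mem_univ (C i)) m fun c _ ↦ hclass c

end IndependentSets

section PathsAndCycles

variable {n m : ℕ}

theorem card_le_of_indepSetFreeOn_pathGraph {s : Finset (Fin n)}
    (hs : (pathGraph n).IndepSetFreeOn s (m + 1)) : s.card ≤ m * 2 :=
  card_le_mul_of_colorable_of_indepSetFreeOn
    (((pathGraph.bicoloring n).colorable).of_hom (Embedding.induce _).toHom) hs

theorem cycleGraph_succ_adj {u v : Fin (n + 1)} :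
    (cycleGraph (n + 1)).Adj u v ↔ u ≠ v ∧ (u + 1 = v ∨ v + 1 = u) := by
  simp only [cycleGraph_eq_circulantGraph, circulantGraph_adj, Set.mem_singleton_iff,
    sub_eq_iff_eq_add']
  grind

theorem cycleGraph_induce_compl_singleton_colorable (c : Fin (n + 1)) :
    ((cycleGraph (n + 1)).induce {c}ᶜ).Colorable 2 := by
  have val_succ {i j : Fin (n + 1)} (hj : j ≠ c) (hij : i + 1 = j) :
      (i - c).val + 1 = (j - c).val := by
    subst hij
    have hlast : i - c ≠ Fin.last n := fun h ↦ hj <| by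
      rw [← sub_eq_zero, add_sub_right_comm, h, Fin.last_add_one]
    rw [add_sub_right_comm, Fin.val_add_one, if_neg hlast]
  let unroll : (cycleGraph (n + 1)).induce {c}ᶜ →g pathGraph (n + 1) :=
    { toFun i := i.1 - c
      map_rel' {i j} hij := pathGraph_adj.mpr <|
        (cycleGraph_succ_adj.mp hij).2.imp (val_succ j.2) (val_succ i.2) }
  exact (pathGraph.bicoloring (n + 1)).colorable.of_hom unroll

theorem card_le_of_indepSetFreeOn_cycleGraph {s : Finset (Fin (n + 1))} (hn : n ≠ m * 2)
    (hs : (cycleGraph (n + 1)).IndepSetFreeOn s (m + 1)) : s.card ≤ m * 2 := by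
  have card_le_of_notMem {t : Finset (Fin (n + 1))} {c : Fin (n + 1)} (hts : t ⊆ s) (hc : c ∉ t) :
      t.card ≤ m * 2 := by
    have htc : (t : Set (Fin (n + 1))) ⊆ {c}ᶜ := by simpa using hc
    refine card_le_mul_of_colorable_of_indepSetFreeOn
      ((cycleGraph_induce_compl_singleton_colorable c).of_hom (induceHomOfLE _ htc).toHom)
      fun r hr ↦ hs (hr.trans (Finset.coe_subset.mpr hts))
  by_cases hfull : s = Finset.univ
  · have hcard : (s.erase 0).card = n := by simp [hfull]
    have : (s.erase 0).card ≤ m * 2 :=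
      card_le_of_notMem (Finset.erase_subset 0 s) (Finset.notMem_erase 0 s)
    have : s.card = n + 1 := by simp [hfull]
    omega
  · obtain ⟨c, hc⟩ : ∃ c, c ∉ s := by simpa [Finset.eq_univ_iff_forall] using hfull
    exact card_le_of_notMem subset_rfl hc

end PathsAndCycles

section FatPathsAndCycles

variable {V : Type*} {G : SimpleGraph V} {l m : ℕ} {N : Set V}

theorem IsFatPathDecomp.isHPartition {L : Fin l → Set V} (hL : IsFatPathDecomp G l L) :
    IsHPartition G (pathGraph l) L := by
  refine ⟨fun i j ↦ hL.2.1 i j, fun i j u v hu hv huv ↦ ?_⟩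
  rw [pathGraph_adj]
  exact (hL.2.2 i j u v hu hv huv.ne).mp huv

theorem IsFatCycleDecomp.isHPartition {L : Fin (l + 1) → Set V} (hL : IsFatCycleDecomp G l L) :
    IsHPartition G (cycleGraph (l + 1)) L := by
  refine ⟨fun i j ↦ hL.2.1 i j, fun i j u v hu hv huv ↦ or_iff_not_imp_left.mpr fun hij ↦ ?_⟩
  rw [cycleGraph_succ_adj]
  have hmod := ((hL.2.2 i j u v hu hv huv.ne).mp huv).resolve_left hij
  exact ⟨hij, by simpa [Fin.ext_iff, Fin.val_add] using hmod⟩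

theorem IsFatPathDecomp.ncard_meeting_le {L : Fin l → Set V} (hL : IsFatPathDecomp G l L)
    (hN : G.IndepSetFreeOn N (m + 1)) : {i | ∃ u ∈ L i, u ∈ N}.ncard ≤ m * 2 := by
  classical
  rw [Set.ncard_eq_toFinset_card']
  exact card_le_of_indepSetFreeOn_pathGraph (by simpa using hL.isHPartition.indepSetFreeOn hN)

theorem IsFatCycleDecomp.ncard_meeting_le {L : Fin (l + 1) → Set V} (hL : IsFatCycleDecomp G l L)
    (hl : l ≠ m * 2) (hN : G.IndepSetFreeOn N (m + 1)) :
    {i | ∃ u ∈ L i, u ∈ N}.ncard ≤ m * 2 := by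
  classical
  rw [Set.ncard_eq_toFinset_card']
  exact card_le_of_indepSetFreeOn_cycleGraph hl (by simpa using hL.isHPartition.indepSetFreeOn hN)

end FatPathsAndCycles

theorem stmt12_general {V : Type*} (G : SimpleGraph V) (hK13 : ¬ ContainsInduced G K13) (l : ℕ)
    (a : V) :
    (∀ L : Fin l → Set V, IsFatPathDecomp G l L →
      {i : Fin l | ∃ u ∈ L i, G.Adj a u}.ncard ≤ 4) ∧
    (l ≠ 4 → ∀ L : Fin (l + 1) → Set V, IsFatCycleDecomp G l L →
      {i : Fin (l + 1) | ∃ u ∈ L i, G.Adj a u}.ncard ≤ 4) := by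
  have hN : G.IndepSetFreeOn (G.neighborSet a) (2 + 1) :=
    indepSetFreeOn_neighborSet_of_not_containsInduced_K13 hK13 a
  exact ⟨fun _ hL ↦ hL.ncard_meeting_le hN, fun hl _ hL ↦ hL.ncard_meeting_le hl hN⟩

/-- **Claim 3.1 (Statement 12).** Let `G` be a `K_{1,3}`-free graph and let `H` be an
induced subgraph of `G` which is a fat `l`-path or a fat `l`-cycle with `l ≥ 5`, and let
`a ∈ V(G) − V(H)`.  Then `N_G(a)` intersects at most four fundamental cliques of `H`. -/
theorem stmt12 {V : Type*} [Fintype V] (G : SimpleGraph V)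
    (hK13 : ¬ ContainsInduced G K13) (l : ℕ) (hl : 5 ≤ l) (a : V) :
    (∀ L : Fin l → Set V, IsFatPathDecomp G l L → (∀ i, a ∉ L i) →
      {i : Fin l | ∃ u ∈ L i, G.Adj a u}.ncard ≤ 4) ∧
    (∀ L : Fin (l + 1) → Set V, IsFatCycleDecomp G l L → (∀ i, a ∉ L i) →
      {i : Fin (l + 1) | ∃ u ∈ L i, G.Adj a u}.ncard ≤ 4) := by
  have h := stmt12_general G hK13 l a
  exact ⟨fun L hL _ ↦ h.1 L hL, fun L hL _ ↦ h.2 (by omega) L hL⟩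
end

section
/- Let m ≥ 1 be an integer, let G be a {K_{1,3}, B_{1,m}}-free graph, let H = F_p(L_1,…,L_l) be an induced subgraph of G that is a fat l-path with l ≥ max{3m, m+4}, and let a ∈ V(G) − V(H). Let I = {i ∈ {1,…,l} : N_G(a) ∩ L_i ≠ ∅}. If there exists an index j with 2 ≤ j ≤ l−2 such that I ∩ [2, l−1] = {j, j+1}, then either (j = 2 and 1 ∈ I) or (j = l−2 and l ∈ I). -/
open SimpleGraph

/-- The fundamental clique with (1-based) index `n`, i.e. the paper's `L_n`
(empty when `n ∉ {1, …, l}`). -/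
def cliqueAt {V : Type*} {l : ℕ} (L : Fin l → Set V) (n : ℕ) : Set V :=
  {v | ∃ i : Fin l, (i : ℕ) + 1 = n ∧ v ∈ L i}

/-!
Choosing one vertex from every fundamental clique, a neighbour of `a` whenever there is one, gives
an induced path of `G`. If `a` is adjacent to exactly the second and third vertices of an induced
path on `m + 3` vertices, then these vertices and `a` form a `B_{1,m}`. When the conclusion fails
and one end of the chosen path is not adjacent to `a`, the path contains such a subpath, read in
one of the two directions, because `2m + 2 ≤ l`. When the conclusion fails and both ends are
adjacent to `a`, they form a claw centred at `a` together with an inner neighbour of `a`.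
-/

section PathGraph

/-- The embedding of the path on `n` vertices into the path on `l` vertices as the subpath which
starts at the vertex `s`. -/
def pathGraphShift {n l : ℕ} (s : ℕ) (h : s + n ≤ l) : pathGraph n ↪g pathGraph l where
  toFun i := ⟨s + i, by omega⟩
  inj' i j hij := by simpa [Fin.ext_iff] using hij
  map_rel_iff' := by
    intro i j
    change (pathGraph l).Adj ⟨s + i, _⟩ ⟨s + j, _⟩ ↔ _
    simp only [pathGraph_adj, add_assoc, Nat.add_left_cancel_iff]

@[simp]
theorem coe_pathGraphShift {n l : ℕ} (s : ℕ) (h : s + n ≤ l) (i : Fin n) :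
    (pathGraphShift s h i : ℕ) = s + i :=
  rfl

/-- The reversal of a path, as an automorphism. -/
def pathGraphRev (n : ℕ) : pathGraph n ≃g pathGraph n where
  toEquiv := Fin.revPerm
  map_rel_iff' := by
    intro i j
    simp only [pathGraph_adj, Fin.revPerm_apply, Fin.val_rev]
    omega

@[simp]
theorem pathGraphRev_apply {n : ℕ} (i : Fin n) : pathGraphRev n i = i.rev :=
  rfl

end PathGraph

section ForbiddenSubgraphs

variable {V : Type*} {G : SimpleGraph V}

theorem containsInduced_of_injective {W : Type*} {H : SimpleGraph W} {f : W → V}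
    (hf : Function.Injective f) (hadj : ∀ p q, G.Adj (f p) (f q) ↔ H.Adj p q) :
    ContainsInduced G H :=
  ⟨⟨⟨f, hf⟩, hadj _ _⟩⟩

theorem containsInduced_K13 {c u v w : V} (hu : G.Adj c u) (hv : G.Adj c v) (hw : G.Adj c w)
    (huv : u ≠ v) (huw : u ≠ w) (hvw : v ≠ w)
    (huv' : ¬ G.Adj u v) (huw' : ¬ G.Adj u w) (hvw' : ¬ G.Adj v w) :
    ContainsInduced G K13 := by
  refine containsInduced_of_injective (f := ![c, u, v, w]) ?_ ?_
  · intro p q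
    fin_cases p <;> fin_cases q <;>
      simp [hu.ne, hv.ne, hw.ne, hu.ne', hv.ne', hw.ne', huv, huw, hvw, huv.symm, huw.symm,
        hvw.symm]
  · intro p q
    fin_cases p <;> fin_cases q <;>
      simp [K13, graphOfList, hu, hv, hw, huv', huw', hvw', G.adj_comm _ c, G.adj_comm v u,
        G.adj_comm w]

/-- The map from the vertices of `B_{1,m}` which sends the vertex `2` to `a` and the induced path
`3, 0, 1, 4, 5, …, m + 3` formed by the other vertices to the sequence `y`. -/
def bgraphVertex {m : ℕ} (y : Fin (m + 3) → V) (a : V) : Fin (m + 4) → V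
  | ⟨0, _⟩ => y ⟨1, by omega⟩
  | ⟨1, _⟩ => y ⟨2, by omega⟩
  | ⟨2, _⟩ => a
  | ⟨3, _⟩ => y ⟨0, by omega⟩
  | ⟨k + 4, _⟩ => y ⟨k + 3, by omega⟩

theorem containsInduced_Bgraph {m : ℕ} (y : pathGraph (m + 3) ↪g G) {a : V}
    (ha : ∀ i, G.Adj a (y i) ↔ (i : ℕ) = 1 ∨ (i : ℕ) = 2) :
    ContainsInduced G (Bgraph m) := by
  have ha' (i : Fin (m + 3)) : a ≠ y i := by
    rintro rfl
    have h₁ := (ha ⟨1, by omega⟩).mpr (Or.inl rfl)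
    have h₂ := (ha ⟨2, by omega⟩).mpr (Or.inr rfl)
    simp only [y.map_adj_iff, pathGraph_adj] at h₁ h₂
    omega
  refine containsInduced_of_injective (f := bgraphVertex y a) ?_ ?_
  · rintro ⟨_ | _ | _ | _ | p, hp⟩ ⟨_ | _ | _ | _ | q, hq⟩ <;>
      simp [bgraphVertex, ha', (ha' _).symm]
  · rintro ⟨_ | _ | _ | _ | p, hp⟩ ⟨_ | _ | _ | _ | q, hq⟩ <;>
      simp [bgraphVertex, Bgraph, ha, G.adj_comm _ a, pathGraph_adj]
    omega

end ForbiddenSubgraphs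

section AttachedVertex

variable {V : Type*} {G : SimpleGraph V} {m n l k s : ℕ} {a : V}

theorem containsInduced_Bgraph_of_subpath (x : pathGraph l ↪g G) (hs : s + m + 3 ≤ l)
    (ha : ∀ i : Fin l, s ≤ i → i ≤ s + m + 2 →
      (G.Adj a (x i) ↔ (i : ℕ) = s + 1 ∨ (i : ℕ) = s + 2)) :
    ContainsInduced G (Bgraph m) := by
  refine containsInduced_Bgraph (a := a) (x.comp (pathGraphShift s hs)) fun i => ?_
  have h := ha (pathGraphShift s hs i)
  simp only [coe_pathGraphShift, Nat.add_left_cancel_iff] at h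
  exact h (by omega) (by omega)

theorem containsInduced_Bgraph_of_subpath_rev (x : pathGraph l ↪g G) (hs : s + m + 3 ≤ l)
    (ha : ∀ i : Fin l, s ≤ i → i ≤ s + m + 2 →
      (G.Adj a (x i) ↔ (i : ℕ) = s + m ∨ (i : ℕ) = s + m + 1)) :
    ContainsInduced G (Bgraph m) := by
  refine containsInduced_Bgraph (a := a)
    ((x.comp (pathGraphShift s hs)).comp (pathGraphRev (m + 3)).toEmbedding) fun i => ?_
  have h := ha (pathGraphShift s hs i.rev)
  simp only [coe_pathGraphShift, Fin.val_rev] at h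
  exact (h (by omega) (by omega)).trans (by omega)

theorem containsInduced_K13_of_path (x : pathGraph l ↪g G) {i j k : Fin l}
    (hij : (i : ℕ) + 1 < j) (hjk : (j : ℕ) + 1 < k)
    (hi : G.Adj a (x i)) (hj : G.Adj a (x j)) (hk : G.Adj a (x k)) :
    ContainsInduced G K13 := by
  apply containsInduced_K13 hi hj hk <;>
    simp only [ne_eq, x.injective.eq_iff, Fin.ext_iff, x.map_adj_iff, pathGraph_adj] <;>
    omega

/-- Among the inner vertices of the path `x`, exactly `x (k + 1)` and `x (k + 2)` are adjacent to
`a`. For a path with one vertex in each of `l = n + 1` cliques and `j = k + 2`, this is the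
condition `I ∩ [2, l - 1] = {j, j + 1}` with 0-based indices. The ends of `x` are left
unconstrained. -/
structure IsInnerNeighborPair (a : V) (x : pathGraph (n + 1) ↪g G) (k : ℕ) : Prop where
  add_three_le : k + 3 ≤ n
  adj_iff : ∀ i : Fin (n + 1), 0 < (i : ℕ) → (i : ℕ) < n →
    (G.Adj a (x i) ↔ (i : ℕ) = k + 1 ∨ (i : ℕ) = k + 2)

namespace IsInnerNeighborPair

variable {x : pathGraph (n + 1) ↪g G}

theorem reverse (h : IsInnerNeighborPair a x k) :
    IsInnerNeighborPair a (x.comp (pathGraphRev (n + 1)).toEmbedding) (n - 3 - k) := by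
  have hk := h.add_three_le
  refine ⟨by omega, fun i hpos hlt => ?_⟩
  have hrev := h.adj_iff i.rev
  rw [Fin.val_rev] at hrev
  exact (hrev (by omega) (by omega)).trans (by omega)

theorem first_adj_of_not_last_adj (h : IsInnerNeighborPair a x k)
    (hB1m : ¬ ContainsInduced G (Bgraph m)) (hn : 2 * m + 1 ≤ n)
    (hlast : ¬ G.Adj a (x (Fin.last n))) :
    k = 0 ∧ G.Adj a (x 0) := by
  have hk := h.add_three_le
  by_contra! hfirst
  have hadj (i : Fin (n + 1)) (hi : k = 0 ∨ 0 < (i : ℕ)) :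
      G.Adj a (x i) ↔ (i : ℕ) = k + 1 ∨ (i : ℕ) = k + 2 := by
    rcases eq_or_ne i 0 with rfl | hpos
    · exact iff_of_false (hfirst (by simpa using hi)) (by simp)
    rcases i.le_last.eq_or_lt with rfl | hlt
    · exact iff_of_false hlast (by rw [Fin.val_last]; omega)
    · exact h.adj_iff i (Fin.pos_iff_ne_zero.mpr hpos) hlt
  by_cases hroom : k + m + 2 ≤ n
  · exact hB1m (containsInduced_Bgraph_of_subpath (s := k) x (by omega)
      fun i hi _ => hadj i (by omega))
  · have hmk : m ≤ k := by omega
    exact hB1m (containsInduced_Bgraph_of_subpath_rev (s := k + 1 - m) x (by omega)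
      fun i hi _ => (hadj i (by omega)).trans (by omega))

theorem last_adj_of_not_first_adj (h : IsInnerNeighborPair a x k)
    (hB1m : ¬ ContainsInduced G (Bgraph m)) (hn : 2 * m + 1 ≤ n) (hfirst : ¬ G.Adj a (x 0)) :
    k + 3 = n ∧ G.Adj a (x (Fin.last n)) := by
  have hk := h.add_three_le
  obtain ⟨hk', hadj⟩ := h.reverse.first_adj_of_not_last_adj hB1m hn (by simpa using hfirst)
  exact ⟨by omega, by simpa using hadj⟩

theorem eq_zero_or_add_three_eq (h : IsInnerNeighborPair a x k)
    (hK13 : ¬ ContainsInduced G K13) (hfirst : G.Adj a (x 0))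
    (hlast : G.Adj a (x (Fin.last n))) :
    k = 0 ∨ k + 3 = n := by
  have hk := h.add_three_le
  by_contra! hcon
  let i : Fin (n + 1) := ⟨k + 1, by omega⟩
  have hinner : G.Adj a (x i) := (h.adj_iff i k.succ_pos (by lia)).mpr (Or.inl rfl)
  have hi : (i : ℕ) + 1 < Fin.last n := by rw [Fin.val_last]; lia
  exact hK13 (containsInduced_K13_of_path x (by lia) hi hfirst hinner hlast)

theorem end_adj (h : IsInnerNeighborPair a x k) (hK13 : ¬ ContainsInduced G K13)
    (hB1m : ¬ ContainsInduced G (Bgraph m)) (hn : 2 * m + 1 ≤ n) :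
    (k = 0 ∧ G.Adj a (x 0)) ∨ (k + 3 = n ∧ G.Adj a (x (Fin.last n))) := by
  by_cases hlast : G.Adj a (x (Fin.last n))
  · by_cases hfirst : G.Adj a (x 0)
    · exact (h.eq_zero_or_add_three_eq hK13 hfirst hlast).imp (⟨·, hfirst⟩) (⟨·, hlast⟩)
    · exact Or.inr (h.last_adj_of_not_first_adj hB1m hn hfirst)
  · exact Or.inl (h.first_adj_of_not_last_adj hB1m hn hlast)

end IsInnerNeighborPair

end AttachedVertex

section FatPath

variable {V : Type*} {G : SimpleGraph V} {l : ℕ} {L : Fin l → Set V}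

theorem cliqueAt_succ (i : Fin l) : cliqueAt L (i + 1) = L i := by
  ext v
  simp [cliqueAt, Fin.val_inj]

theorem IsFatPathDecomp.exists_pathGraph_embedding (hL : IsFatPathDecomp G l L) (a : V) :
    ∃ x : pathGraph l ↪g G, ∀ i, G.Adj a (x i) ↔ ∃ u ∈ L i, G.Adj a u := by
  obtain ⟨hne, hdisj, hadj⟩ := hL
  have hex (i : Fin l) : ∃ v ∈ L i, G.Adj a v ↔ ∃ u ∈ L i, G.Adj a u := by
    by_cases h : ∃ u ∈ L i, G.Adj a u
    · obtain ⟨u, hu, hau⟩ := h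
      exact ⟨u, hu, iff_of_true hau ⟨u, hu, hau⟩⟩
    · obtain ⟨u, hu⟩ := hne i
      exact ⟨u, hu, fun hau => ⟨u, hu, hau⟩, fun h' => absurd h' h⟩
  choose x hxL hxa using hex
  have hinj : Function.Injective x := fun i j hij => by
    by_contra hij'
    exact Set.disjoint_left.mp (hdisj i j hij') (hxL i) (hij ▸ hxL j)
  refine ⟨⟨⟨x, hinj⟩, fun {i j} => ?_⟩, hxa⟩
  change G.Adj (x i) (x j) ↔ (pathGraph l).Adj i j
  rcases eq_or_ne i j with rfl | hij
  · simp
  · simp [hadj i j _ _ (hxL i) (hxL j) (hinj.ne hij), pathGraph_adj, hij]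

end FatPath

theorem stmt13_general {V : Type*} {m : ℕ} (G : SimpleGraph V)
    (hK13 : ¬ ContainsInduced G K13) (hB1m : ¬ ContainsInduced G (Bgraph m))
    {l : ℕ} (hl : 2 * m + 2 ≤ l) {L : Fin l → Set V}
    (hL : IsFatPathDecomp G l L) {a : V} {j : ℕ}
    (hI : {n : ℕ | ∃ u ∈ cliqueAt L n, G.Adj a u} ∩ Set.Icc 2 (l - 1) = {j, j + 1}) :
    (j = 2 ∧ 1 ∈ {n : ℕ | ∃ u ∈ cliqueAt L n, G.Adj a u}) ∨
    (j = l - 2 ∧ l ∈ {n : ℕ | ∃ u ∈ cliqueAt L n, G.Adj a u}) := by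
  obtain ⟨x, hx⟩ := hL.exists_pathGraph_embedding a
  have hmem (i : Fin l) : (i : ℕ) + 1 ∈ {n | ∃ u ∈ cliqueAt L n, G.Adj a u} ↔ G.Adj a (x i) := by
    rw [Set.mem_ofPred_eq, cliqueAt_succ, hx]
  have hj : j ∈ Set.Icc 2 (l - 1) := (hI.ge (by simp)).2
  have hj' : j + 1 ∈ Set.Icc 2 (l - 1) := (hI.ge (by simp)).2
  rw [Set.mem_Icc] at hj hj'
  obtain ⟨k, rfl⟩ := Nat.exists_eq_add_of_le' hj.1
  obtain ⟨n, rfl⟩ : ∃ n, l = n + 1 := ⟨l - 1, by omega⟩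
  have hpair : IsInnerNeighborPair a x k := by
    refine ⟨by omega, fun i hpos hlt => ?_⟩
    have h := Set.ext_iff.mp hI (i + 1)
    rw [Set.mem_inter_iff, hmem, and_iff_left (Set.mem_Icc.mpr (by omega))] at h
    exact h.trans (by simp)
  rcases hpair.end_adj hK13 hB1m (by omega) with ⟨rfl, hadj⟩ | ⟨rfl, hadj⟩
  · exact Or.inl ⟨rfl, (hmem 0).mpr hadj⟩
  · exact Or.inr ⟨rfl, (hmem (Fin.last _)).mpr hadj⟩

/-- **Claim 3.2 (Statement 13).** Let `m ≥ 1`, let `G` be `{K_{1,3}, B_{1,m}}`-free, let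
`H = F_p(L_1,…,L_l)` be an induced fat `l`-path in `G` with `l ≥ max{3m, m+4}` (with the
paper's 1-based indexing `L_n = cliqueAt L n`), and let `a ∈ V(G) − V(H)`.  Let
`I = {n : N_G(a) ∩ L_n ≠ ∅}`.  If `I ∩ [2, l−1] = {j, j+1}` for some `2 ≤ j ≤ l−2`, then
either `j = 2` and `1 ∈ I`, or `j = l−2` and `l ∈ I`. -/
theorem stmt13 {V : Type*} [Fintype V] (m : ℕ) (hm : 1 ≤ m) (G : SimpleGraph V)
    (hK13 : ¬ ContainsInduced G K13) (hB1m : ¬ ContainsInduced G (Bgraph m))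
    (l : ℕ) (hl : max (3 * m) (m + 4) ≤ l) (L : Fin l → Set V)
    (hL : IsFatPathDecomp G l L) (a : V) (ha : ∀ i, a ∉ L i)
    (j : ℕ) (hj1 : 2 ≤ j) (hj2 : j ≤ l - 2)
    (hI : {n : ℕ | ∃ u ∈ cliqueAt L n, G.Adj a u} ∩ Set.Icc 2 (l - 1) = {j, j + 1}) :
    (j = 2 ∧ 1 ∈ {n : ℕ | ∃ u ∈ cliqueAt L n, G.Adj a u}) ∨
    (j = l - 2 ∧ l ∈ {n : ℕ | ∃ u ∈ cliqueAt L n, G.Adj a u}) := by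
  exact stmt13_general G hK13 hB1m (by omega) hL hI
end

section
/- Let G be a K_{1,3}-free graph, let H = F_p(L_1,…,L_l) be an induced subgraph of G that is a fat l-path, and let a ∈ V(G) − V(H) be a vertex with N_G(a) ∩ V(H) ≠ ∅. Let I = {i ∈ {1,…,l} : N_G(a) ∩ L_i ≠ ∅}, and set i_1 = min I and i_2 = max I. If 2 ≤ i_1 ≤ l−1, then every vertex of L_{i_1+1} is adjacent to a; and if 2 ≤ i_2 ≤ l−1, then every vertex of L_{i_2−1} is adjacent to a. -/
open SimpleGraph

/-!
If `a` sees `u ∈ L_n`, then `a` sees all of `L_{n-1}` or all of `L_{n+1}`: nonneighbours `w`, `v`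
of `a` in these two cliques would make `{u; w, v, a}` an induced claw with center `u`. When
`n = min I`, no vertex of `L_{n-1}` is adjacent to `a`, so all of `L_{n+1}` is; `n = max I` is
symmetric.
-/

lemma containsInduced_K13_of_adj {V : Type*} {G : SimpleGraph V} {c x y z : V}
    (hcx : G.Adj c x) (hcy : G.Adj c y) (hcz : G.Adj c z)
    (hxy : Gᶜ.Adj x y) (hxz : Gᶜ.Adj x z) (hyz : Gᶜ.Adj y z) : ContainsInduced G K13 := by
  rw [compl_adj] at hxy hxz hyz
  have adj_iff : ∀ i j, G.Adj (![c, x, y, z] i) (![c, x, y, z] j) ↔ K13.Adj i j := by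
    intro i j
    fin_cases i <;> fin_cases j <;>
      simp [K13, graphOfList, hcx, hcy, hcz, hcx.symm, hcy.symm, hcz.symm, hxy, hxz, hyz,
        G.adj_comm y x, G.adj_comm z x, G.adj_comm z y]
  have injective : Function.Injective ![c, x, y, z] := by
    simp [← List.nodup_ofFn, hcx.ne, hcy.ne, hcz.ne, hxy.1, hxz.1, hyz.1]
  exact ⟨⟨⟨_, injective⟩, adj_iff _ _⟩⟩

/-- The set `I` of (1-based) indices of the fundamental cliques that contain a neighbour of `a`;
its minimum and maximum are the paper's `i₁` and `i₂`. -/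
def neighborIndices {V : Type*} {l : ℕ} (G : SimpleGraph V) (L : Fin l → Set V) (a : V) : Set ℕ :=
  {n | ∃ u ∈ cliqueAt L n, G.Adj a u}

section CliqueAt

variable {V : Type*} {l n : ℕ} {L : Fin l → Set V}

lemma one_le_of_mem_cliqueAt {u : V} (hu : u ∈ cliqueAt L n) : 1 ≤ n := by
  obtain ⟨i, hi, -⟩ := hu
  omega

lemma le_of_mem_cliqueAt {u : V} (hu : u ∈ cliqueAt L n) : n ≤ l := by
  obtain ⟨i, hi, -⟩ := hu
  omega

lemma bddAbove_neighborIndices (G : SimpleGraph V) (L : Fin l → Set V) (a : V) :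
    BddAbove (neighborIndices G L a) :=
  ⟨l, fun _ ⟨_, hu, _⟩ => le_of_mem_cliqueAt hu⟩

lemma notMem_cliqueAt {a : V} (ha : ∀ i, a ∉ L i) (n : ℕ) : a ∉ cliqueAt L n :=
  fun ⟨i, _, hi⟩ => ha i hi

end CliqueAt

namespace IsFatPathDecomp

variable {V : Type*} {G : SimpleGraph V} {l m n : ℕ} {L : Fin l → Set V} {a u v w : V}

lemma nonempty_cliqueAt (hL : IsFatPathDecomp G l L) (h1 : 1 ≤ n) (hn : n ≤ l) :
    (cliqueAt L n).Nonempty := by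
  obtain ⟨u, hu⟩ := hL.1 ⟨n - 1, by omega⟩
  exact ⟨u, _, Nat.sub_add_cancel h1, hu⟩

lemma ne_of_mem_cliqueAt (hL : IsFatPathDecomp G l L) (hu : u ∈ cliqueAt L m)
    (hv : v ∈ cliqueAt L n) (hmn : m ≠ n) : u ≠ v := by
  obtain ⟨i, rfl, hu⟩ := hu
  obtain ⟨j, rfl, hv⟩ := hv
  exact (hL.2.1 i j (by rintro rfl; exact hmn rfl)).ne_of_mem hu hv

lemma adj_of_mem_cliqueAt_succ (hL : IsFatPathDecomp G l L) (hu : u ∈ cliqueAt L n)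
    (hv : v ∈ cliqueAt L (n + 1)) : G.Adj u v := by
  have huv : u ≠ v := hL.ne_of_mem_cliqueAt hu hv n.succ_ne_self.symm
  obtain ⟨i, hi, hu⟩ := hu
  obtain ⟨j, hj, hv⟩ := hv
  exact (hL.2.2 i j u v hu hv huv).2 (by omega)

lemma compl_adj_of_mem_cliqueAt (hL : IsFatPathDecomp G l L) (hu : u ∈ cliqueAt L m)
    (hv : v ∈ cliqueAt L n) (hmn : m + 1 < n) : Gᶜ.Adj u v := by
  have huv : u ≠ v := hL.ne_of_mem_cliqueAt hu hv (by omega)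
  obtain ⟨i, hi, hu⟩ := hu
  obtain ⟨j, hj, hv⟩ := hv
  exact (compl_adj ..).2 ⟨huv, fun h => by have := (hL.2.2 i j u v hu hv huv).1 h; omega⟩

lemma adj_or_adj_of_adj (hL : IsFatPathDecomp G l L) (hK13 : ¬ ContainsInduced G K13)
    (hw : w ∈ cliqueAt L n) (hu : u ∈ cliqueAt L (n + 1)) (hv : v ∈ cliqueAt L (n + 2))
    (hwa : w ≠ a) (hva : v ≠ a) (hau : G.Adj a u) : G.Adj a w ∨ G.Adj a v := by
  by_contra! h
  have hwa' : Gᶜ.Adj w a := (compl_adj ..).2 ⟨hwa, fun hadj => h.1 hadj.symm⟩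
  have hva' : Gᶜ.Adj v a := (compl_adj ..).2 ⟨hva, fun hadj => h.2 hadj.symm⟩
  exact hK13 <| containsInduced_K13_of_adj (hL.adj_of_mem_cliqueAt_succ hw hu).symm
    (hL.adj_of_mem_cliqueAt_succ hu hv) hau.symm
    (hL.compl_adj_of_mem_cliqueAt hw hv (by omega)) hwa' hva'

lemma adj_of_isLeast (hL : IsFatPathDecomp G l L) (hK13 : ¬ ContainsInduced G K13)
    (ha : ∀ i, a ∉ L i) (hn : IsLeast (neighborIndices G L a) n) (h2 : 2 ≤ n) :
    ∀ v ∈ cliqueAt L (n + 1), G.Adj a v := by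
  intro v hv
  obtain ⟨⟨u, hu, hau⟩, hmin⟩ := hn
  obtain ⟨k, rfl⟩ : ∃ k, n = k + 1 := ⟨n - 1, by omega⟩
  have hkl : k + 1 ≤ l := le_of_mem_cliqueAt hu
  obtain ⟨w, hw⟩ : (cliqueAt L k).Nonempty := hL.nonempty_cliqueAt (by omega) (by omega)
  have haw : ¬ G.Adj a w := fun h => k.not_succ_le_self (hmin ⟨w, hw, h⟩)
  exact (hL.adj_or_adj_of_adj hK13 hw hu hv (ne_of_mem_of_not_mem hw (notMem_cliqueAt ha _))
    (ne_of_mem_of_not_mem hv (notMem_cliqueAt ha _)) hau).resolve_left haw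

lemma adj_of_isGreatest (hL : IsFatPathDecomp G l L) (hK13 : ¬ ContainsInduced G K13)
    (ha : ∀ i, a ∉ L i) (hn : IsGreatest (neighborIndices G L a) n) (hnl : n < l) :
    ∀ v ∈ cliqueAt L (n - 1), G.Adj a v := by
  intro v hv
  obtain ⟨⟨u, hu, hau⟩, hmax⟩ := hn
  obtain ⟨k, rfl⟩ : ∃ k, n = k + 1 := ⟨n - 1, by have := one_le_of_mem_cliqueAt hu; omega⟩
  obtain ⟨w, hw⟩ : (cliqueAt L (k + 2)).Nonempty := hL.nonempty_cliqueAt (by omega) hnl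
  have haw : ¬ G.Adj a w := fun h => (k + 1).not_succ_le_self (hmax ⟨w, hw, h⟩)
  exact (hL.adj_or_adj_of_adj hK13 hv hu hw (ne_of_mem_of_not_mem hv (notMem_cliqueAt ha _))
    (ne_of_mem_of_not_mem hw (notMem_cliqueAt ha _)) hau).resolve_right haw

end IsFatPathDecomp

theorem stmt14_general {V : Type*} (G : SimpleGraph V) (hK13 : ¬ ContainsInduced G K13)
    (l : ℕ) (L : Fin l → Set V) (hL : IsFatPathDecomp G l L)
    (a : V) (ha : ∀ i, a ∉ L i) (hnbr : ∃ i, ∃ u ∈ L i, G.Adj a u) :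
    (2 ≤ sInf (neighborIndices G L a) → sInf (neighborIndices G L a) ≤ l - 1 →
      ∀ u ∈ cliqueAt L (sInf (neighborIndices G L a) + 1), G.Adj a u) ∧
    (2 ≤ sSup (neighborIndices G L a) → sSup (neighborIndices G L a) ≤ l - 1 →
      ∀ u ∈ cliqueAt L (sSup (neighborIndices G L a) - 1), G.Adj a u) := by
  obtain ⟨i, u, hu, hau⟩ := hnbr
  have hne : (neighborIndices G L a).Nonempty := ⟨i + 1, u, ⟨i, rfl, hu⟩, hau⟩
  have hbdd := bddAbove_neighborIndices G L a
  have hmin : IsLeast (neighborIndices G L a) (sInf (neighborIndices G L a)) := isLeast_csInf hne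
  have hmax : IsGreatest (neighborIndices G L a) (sSup (neighborIndices G L a)) :=
    ⟨Nat.sSup_mem hne hbdd, fun _ => le_csSup hbdd⟩
  exact ⟨fun h2 _ => hL.adj_of_isLeast hK13 ha hmin h2,
    fun _ hl => hL.adj_of_isGreatest hK13 ha hmax (Nat.lt_of_le_pred i.pos hl)⟩

/-- **Claim 3.4 (Statement 14).** Let `G` be a `K_{1,3}`-free graph, let
`H = F_p(L_1,…,L_l)` be an induced fat `l`-path in `G` (1-based indexing,
`L_n = cliqueAt L n`), and let `a ∈ V(G) − V(H)` have a neighbour in `H`.  With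
`I = {n : N_G(a) ∩ L_n ≠ ∅}`, `i₁ = min I` and `i₂ = max I`:  if `2 ≤ i₁ ≤ l−1`, then
every vertex of `L_{i₁+1}` is adjacent to `a`, and if `2 ≤ i₂ ≤ l−1`, then every vertex
of `L_{i₂−1}` is adjacent to `a`. -/
theorem stmt14 {V : Type*} [Fintype V] (G : SimpleGraph V)
    (hK13 : ¬ ContainsInduced G K13)
    (l : ℕ) (hl : 5 ≤ l) (L : Fin l → Set V) (hL : IsFatPathDecomp G l L)
    (a : V) (ha : ∀ i, a ∉ L i) (hnbr : ∃ i, ∃ u ∈ L i, G.Adj a u) :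
    (2 ≤ sInf {n : ℕ | ∃ u ∈ cliqueAt L n, G.Adj a u} →
      sInf {n : ℕ | ∃ u ∈ cliqueAt L n, G.Adj a u} ≤ l - 1 →
      ∀ u ∈ cliqueAt L (sInf {n : ℕ | ∃ u ∈ cliqueAt L n, G.Adj a u} + 1), G.Adj a u) ∧
    (2 ≤ sSup {n : ℕ | ∃ u ∈ cliqueAt L n, G.Adj a u} →
      sSup {n : ℕ | ∃ u ∈ cliqueAt L n, G.Adj a u} ≤ l - 1 →
      ∀ u ∈ cliqueAt L (sSup {n : ℕ | ∃ u ∈ cliqueAt L n, G.Adj a u} - 1), G.Adj a u) :=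
  stmt14_general G hK13 l L hL a ha hnbr
end

section
/- For every integer i ≥ 6, every 2-connected fat i-path has a Hamiltonian cycle, and every 2-connected fat i-cycle has a Hamiltonian cycle. -/
open SimpleGraph

/-- A graph is 2-connected if it has at least three vertices and remains connected after
the deletion of any single vertex. -/
def TwoConnected {V : Type*} [Fintype V] (G : SimpleGraph V) : Prop :=
  3 ≤ Fintype.card V ∧ ∀ v : V, (G.induce ({v}ᶜ : Set V)).Connected

/-- `G` has a Hamiltonian cycle. -/
def HasHamiltonianCycle {V : Type*} [DecidableEq V] (G : SimpleGraph V) : Prop :=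
  ∃ (a : V) (p : G.Walk a a), p.IsHamiltonianCycle

/-!
A function labelling the vertices by `0, …, n` cyclically, in such a way that vertices with equal or
cyclically consecutive labels are adjacent, gives a Hamiltonian cycle: list the vertices in
increasing order of label. The clique indices of a fat cycle are such a labelling. In a
fat path on cliques `0, …, k`, each clique other than the first and the last has at least two
vertices, since deleting its only vertex would disconnect the graph. Sending one vertex of each of
these cliques on the way up and the others on the way back gives the round trip
`0, 1, …, k, k - 1, …, 1`, and the positions along it are again a cyclic labelling.
-/

open Set

theorem wcovBy_apply_of_monotone {α β : Type*} [LinearOrder α] [Preorder β] {f : α → β}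
    (hf : Monotone f) (hrange : (range f).OrdConnected) {a b : α} (hab : a ⩿ b) : f a ⩿ f b := by
  refine ⟨hf hab.le, fun y hay hyb ↦ ?_⟩
  obtain ⟨x, rfl⟩ := hrange.out (mem_range_self a) (mem_range_self b) ⟨hay.le, hyb.le⟩
  exact hab.2 (hf.reflect_lt hay) (hf.reflect_lt hyb)

theorem exists_equiv_fin_monotone_comp {V α : Type*} [Fintype V] [LinearOrder α] {n : ℕ}
    (hn : Fintype.card V = n) (f : V → α) : ∃ e : Fin n ≃ V, Monotone (f ∘ e) :=
  let e := (Fintype.equivFinOfCardEq hn).symm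
  ⟨(Tuple.sort (f ∘ e)).trans e, Tuple.monotone_sort (f ∘ e)⟩

section Hamiltonian

variable {V : Type*} [DecidableEq V] {G : SimpleGraph V}

theorem HasHamiltonianCycle.map {W : Type*} [DecidableEq W] {H : SimpleGraph W}
    (hG : HasHamiltonianCycle G) (φ : G →g H) (hφ : Function.Bijective φ) :
    HasHamiltonianCycle H :=
  let ⟨_, p, hp⟩ := hG
  ⟨_, p.map φ, hp.map hφ⟩

theorem hasHamiltonianCycle_cycleGraph (n : ℕ) : HasHamiltonianCycle (cycleGraph (n + 3)) :=
  ⟨0, cycleGraph.cycle n, Walk.isHamiltonianCycle_iff_isCycle_and_length_eq.mpr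
    ⟨cycleGraph.isCycle_cycle, by rw [cycleGraph.length_cycle, Fintype.card_fin]⟩⟩

theorem hasHamiltonianCycle_of_forall_adj_add_one {n : ℕ} (e : Fin (n + 3) ≃ V)
    (he : ∀ i, G.Adj (e i) (e (i + 1))) : HasHamiltonianCycle G := by
  refine (hasHamiltonianCycle_cycleGraph n).map ⟨e, fun {i j} hij ↦ ?_⟩ e.bijective
  rcases cycleGraph_adj.mp hij with h | h
  · obtain rfl := eq_add_of_sub_eq' h
    exact (he j).symm
  · obtain rfl := eq_add_of_sub_eq' h
    exact he i

theorem hasHamiltonianCycle_of_cyclic_labelling [Fintype V] (hcard : 3 ≤ Fintype.card V) {n : ℕ}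
    {g : V → ℕ} (hg : range g = Iic n)
    (hadj : ∀ u v, u ≠ v → g u = g v ∨ g u + 1 = g v ∨ g u = n ∧ g v = 0 → G.Adj u v) :
    HasHamiltonianCycle G := by
  obtain ⟨k, hk⟩ := Nat.exists_eq_add_of_le' hcard
  obtain ⟨e, he⟩ := exists_equiv_fin_monotone_comp hk g
  have hrange : range (g ∘ e) = Iic n := by rw [e.surjective.range_comp, hg]
  refine hasHamiltonianCycle_of_forall_adj_add_one e fun i ↦ hadj _ _ (e.injective.ne (by simp)) ?_
  induction i using Fin.lastCases with
  | last =>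
    obtain ⟨a, ha⟩ : n ∈ range (g ∘ e) := hrange ▸ self_mem_Iic
    obtain ⟨b, hb⟩ : 0 ∈ range (g ∘ e) := hrange ▸ Nat.zero_le n
    have hlast : g (e (Fin.last _)) ≤ n := hg.subset (mem_range_self _)
    rw [Fin.last_add_one]
    exact .inr <| .inr ⟨hlast.antisymm (ha.symm.trans_le (he (Fin.le_last a))),
      Nat.le_zero.mp ((he (Fin.zero_le b)).trans_eq hb)⟩
  | cast i =>
    have hwcovBy : g (e i.castSucc) ⩿ g (e i.succ) :=
      wcovBy_apply_of_monotone he (hrange ▸ ordConnected_Iic)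
        (i.orderSucc_castSucc ▸ Order.wcovBy_succ _)
    rw [Fin.coeSucc_eq_succ]
    rcases wcovBy_iff_covBy_or_eq.mp hwcovBy with h | h
    · exact .inr <| .inl <| Nat.covBy_iff_add_one_eq.mp h
    · exact .inl h

end Hamiltonian

section Connectivity

variable {V α : Type*} [LinearOrder α] [SuccOrder α] {G : SimpleGraph V} {f : V → α}

theorem exists_apply_eq_of_preconnected (hG : G.Preconnected)
    (hf : ∀ u v, G.Adj u v → f v ≤ Order.succ (f u)) {u v : V} {a : α} (hu : f u ≤ a)
    (hv : a ≤ f v) : ∃ w, f w = a := by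
  obtain ⟨p⟩ := hG u v
  induction p with
  | nil => exact ⟨_, hu.antisymm hv⟩
  | cons huw _ ih =>
    rcases hu.eq_or_lt with h | h
    · exact ⟨_, h⟩
    · exact ih ((hf _ _ huw).trans (Order.succ_le_of_lt h)) hv

theorem exists_ne_apply_eq_of_preconnected_induce_compl {c : V}
    (hc : (G.induce {c}ᶜ).Preconnected) (hf : ∀ u v, G.Adj u v → f v ≤ Order.succ (f u))
    {u v : V} (hu : f u < f c) (hv : f c < f v) : ∃ w ≠ c, f w = f c := by
  have huc : u ≠ c := fun h ↦ hu.ne (congrArg f h)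
  have hvc : v ≠ c := fun h ↦ hv.ne' (congrArg f h)
  obtain ⟨⟨w, hwc⟩, hw⟩ := exists_apply_eq_of_preconnected (f := fun x : ({c}ᶜ : Set V) ↦ f x) hc
    (fun x y hxy ↦ hf x y hxy) (u := ⟨u, huc⟩) (v := ⟨v, hvc⟩) hu.le hv.le
  exact ⟨w, hwc, hw⟩

end Connectivity

theorem exists_round_trip_labelling {V : Type*} {k : ℕ} {f : V → ℕ} (hf : range f = Iic k)
    (htwo : ∀ c, 0 < f c → f c < k → ∃ w ≠ c, f w = f c) :
    ∃ g : V → ℕ, range g = Iic (2 * k - 1) ∧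
      ∀ v, g v = f v ∨ 0 < f v ∧ f v < k ∧ g v = 2 * k - f v := by
  classical
  have hlabel : ∀ j ≤ k, ∃ v, f v = j := fun j hj ↦ hf.superset hj
  have hle (v : V) : f v ≤ k := hf.subset (mem_range_self v)
  have : Nonempty V := ⟨(hlabel 0 k.zero_le).choose⟩
  have hrep (j : ℕ) (hj : j ≤ k) : f (f.invFun j) = j := Function.invFun_eq (hlabel j hj)
  let g (v : V) : ℕ := if 0 < f v ∧ f v < k ∧ v ≠ f.invFun (f v) then 2 * k - f v else f v
  have hg (v : V) : g v = f v ∨ 0 < f v ∧ f v < k ∧ g v = 2 * k - f v := by grind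
  refine ⟨g, Subset.antisymm (range_subset_iff.mpr fun v ↦ ?_) fun j hj ↦ ?_, hg⟩
  · rw [mem_Iic]
    have := hle v
    rcases hg v with h | h <;> omega
  · rw [mem_Iic] at hj
    rcases le_or_gt j k with hjk | hkj
    · exact ⟨f.invFun j, by grind⟩
    · have hback := hrep (2 * k - j) (by omega)
      obtain ⟨w, hw, hfw⟩ := htwo (f.invFun (2 * k - j)) (by omega) (by omega)
      exact ⟨w, by grind⟩

theorem hasHamiltonianCycle_of_path_labelling {V : Type*} [Fintype V] [DecidableEq V]
    {G : SimpleGraph V} (hcard : 3 ≤ Fintype.card V) {k : ℕ} {f : V → ℕ} (hf : range f = Iic k)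
    (hadj : ∀ u v, u ≠ v → f u = f v ∨ f u + 1 = f v ∨ f v + 1 = f u → G.Adj u v)
    (htwo : ∀ c, 0 < f c → f c < k → ∃ w ≠ c, f w = f c) : HasHamiltonianCycle G := by
  obtain ⟨g, hg, hgf⟩ := exists_round_trip_labelling hf htwo
  refine hasHamiltonianCycle_of_cyclic_labelling hcard hg fun u v huv h ↦ hadj u v huv ?_
  have hu : f u ≤ k := hf.subset (mem_range_self u)
  have hv : f v ≤ k := hf.subset (mem_range_self v)
  rcases hgf u with hgu | hgu <;> rcases hgf v with hgv | hgv <;> omega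

section FatGraphs

variable {V : Type*} {G : SimpleGraph V}

theorem exists_surjective_forall_mem {ι : Type*} {L : ι → Set V} (hne : ∀ i, (L i).Nonempty)
    (hdisj : ∀ i j, i ≠ j → Disjoint (L i) (L j)) (hcov : ∀ v, ∃ i, v ∈ L i) :
    ∃ f : V → ι, Function.Surjective f ∧ ∀ v, v ∈ L (f v) :=
  let P := IndexedPartition.mk' L (fun i j ↦ hdisj i j) hne hcov
  ⟨P.index, fun i ↦ ⟨P.some i, P.index_some i⟩, P.mem_index⟩

theorem range_val_comp_of_surjective {k : ℕ} {f : V → Fin (k + 1)} (hf : Function.Surjective f) :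
    range (fun v ↦ (f v : ℕ)) = Iic k := by
  rw [← Iio_succ_eq_Iic, Order.succ_eq_add_one, ← Fin.range_val, ← hf.range_comp]
  rfl

theorem IsFatPathDecomp.exists_labelling {k : ℕ} {L : Fin (k + 1) → Set V}
    (hL : IsFatPathDecomp G (k + 1) L) (hcov : ∀ v, ∃ i, v ∈ L i) :
    ∃ f : V → ℕ, range f = Iic k ∧
      ∀ u v, u ≠ v → (G.Adj u v ↔ f u = f v ∨ f u + 1 = f v ∨ f v + 1 = f u) := by
  obtain ⟨hne, hdisj, hadj⟩ := hL
  obtain ⟨f, hsurj, hmem⟩ := exists_surjective_forall_mem hne hdisj hcov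
  refine ⟨fun v ↦ f v, range_val_comp_of_surjective hsurj, fun u v huv ↦ ?_⟩
  rw [hadj _ _ u v (hmem u) (hmem v) huv, Fin.ext_iff]

theorem IsFatCycleDecomp.exists_labelling {k : ℕ} {L : Fin (k + 1) → Set V}
    (hL : IsFatCycleDecomp G k L) (hcov : ∀ v, ∃ i, v ∈ L i) :
    ∃ f : V → ℕ, range f = Iic k ∧
      ∀ u v, u ≠ v → f u = f v ∨ f u + 1 = f v ∨ f u = k ∧ f v = 0 → G.Adj u v := by
  obtain ⟨hne, hdisj, hadj⟩ := hL
  obtain ⟨f, hsurj, hmem⟩ := exists_surjective_forall_mem hne hdisj hcov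
  refine ⟨fun v ↦ f v, range_val_comp_of_surjective hsurj, fun u v huv h ↦ ?_⟩
  refine (hadj _ _ u v (hmem u) (hmem v) huv).mpr ?_
  dsimp only at h
  rcases h with h | h | ⟨hu, hv⟩
  · exact .inl (Fin.ext h)
  · exact .inr <| .inl <| by rw [h, Nat.mod_eq_of_lt (f v).isLt]
  · exact .inr <| .inl <| by rw [hu, hv, Nat.mod_self]

variable [Fintype V] [DecidableEq V] {l : ℕ}

theorem IsFatPathDecomp.hasHamiltonianCycle {L : Fin l → Set V} (hL : IsFatPathDecomp G l L)
    (hcov : ∀ v, ∃ i, v ∈ L i) (h2c : TwoConnected G) : HasHamiltonianCycle G := by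
  have : Nonempty V := Fintype.card_pos_iff.mp (three_pos.trans_le h2c.1)
  obtain ⟨i, -⟩ := hcov (Classical.arbitrary V)
  obtain ⟨k, rfl⟩ := Nat.exists_eq_add_one.mpr i.pos
  obtain ⟨f, hf, hadj⟩ := hL.exists_labelling hcov
  refine hasHamiltonianCycle_of_path_labelling h2c.1 hf (fun u v huv ↦ (hadj u v huv).mpr)
    fun c hc₀ hck ↦ ?_
  have hstep (u v : V) (huv : G.Adj u v) : f v ≤ f u + 1 := by
    have := (hadj u v huv.ne).mp huv
    omega
  obtain ⟨u, hu⟩ : 0 ∈ range f := hf.superset k.zero_le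
  obtain ⟨v, hv⟩ : k ∈ range f := hf.superset self_mem_Iic
  exact exists_ne_apply_eq_of_preconnected_induce_compl (h2c.2 c).preconnected hstep
    (hu ▸ hc₀) (hv ▸ hck)

theorem IsFatCycleDecomp.hasHamiltonianCycle {L : Fin (l + 1) → Set V}
    (hL : IsFatCycleDecomp G l L) (hcov : ∀ v, ∃ i, v ∈ L i) (hcard : 3 ≤ Fintype.card V) :
    HasHamiltonianCycle G := by
  obtain ⟨f, hf, hadj⟩ := hL.exists_labelling hcov
  exact hasHamiltonianCycle_of_cyclic_labelling hcard hf hadj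

end FatGraphs

theorem stmt17_general {V : Type*} [Fintype V] [DecidableEq V] (l : ℕ) (G : SimpleGraph V)
    (hG : (TwoConnected G ∧ ∃ L : Fin l → Set V, IsFatPathDecomp G l L ∧ ∀ v, ∃ i, v ∈ L i) ∨
      (3 ≤ Fintype.card V ∧
        ∃ L : Fin (l + 1) → Set V, IsFatCycleDecomp G l L ∧ ∀ v, ∃ i, v ∈ L i)) :
    HasHamiltonianCycle G := by
  rcases hG with ⟨h2c, L, hL, hcov⟩ | ⟨hcard, L, hL, hcov⟩
  · exact hL.hasHamiltonianCycle hcov h2c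
  · exact hL.hasHamiltonianCycle hcov hcard

/-- **(Statement 17.)** For every integer `i ≥ 6`, every 2-connected fat `i`-path has a
Hamiltonian cycle, and every 2-connected fat `i`-cycle has a Hamiltonian cycle. -/
theorem stmt17 {V : Type*} [Fintype V] [DecidableEq V] (i : ℕ) (hi : 6 ≤ i)
    (G : SimpleGraph V) (h2c : TwoConnected G)
    (hG : IsFatPath G i ∨ IsFatCycle G i) :
    HasHamiltonianCycle G :=
  stmt17_general i G (hG.imp (fun h ↦ ⟨h2c, h.2⟩) fun h ↦ ⟨h2c.1, h.2⟩)
end
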